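/- Let p ∈ [1,∞) and let γ : [0,1] → (1,∞)² be a Lipschitz map with image Γ = γ([0,1]). For λ > 1, let λB denote the weighted backward shift on ℓp(ℕ) with constant weight λ, that is, (λB x)(n) = λ·x(n+1). Then the family (λB × μB)_{(λ,μ)∈Γ} admits a common hypercyclic algebra on ℓp(ℕ)² for the coordinatewise product; in particular it admits a common hypercyclic vector. -/

import Mathlib

open scoped ENNReal
open Finset

noncomputable section

/-- The space `ℓᵖ(ℕ)` of `p`-summable complex sequences. -/
abbrev lpC (p : ℝ≥0∞) : Type := lp (fun _ : ℕ => ℂ) p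

/-- `T` is the product operator `B_{w(lam 0)} × ⋯ × B_{w(lam (d-1))}` of weighted backward
shifts, the weight sequence of the `i`-th factor being `(w (lam i) n)_{n ≥ 1}`. -/
def IsProductShift (p : ℝ≥0∞) [Fact (1 ≤ p)] (d : ℕ) (w : ℝ → ℕ → ℝ)
    (T : (Fin d → lpC p) →L[ℂ] (Fin d → lpC p)) (lam : Fin d → ℝ) : Prop :=
  ∀ (v : Fin d → lpC p) (i : Fin d) (n : ℕ),
    (T v) i n = (w (lam i) (n + 1) : ℂ) * v i (n + 1)

/-- The family `T lam`, `lam ∈ S`, admits a common hypercyclic algebra for the coordinatewise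
product: there is a non-unital subalgebra `A ≠ {0}` of `(ℓᵖ(ℕ))^d` (closed under addition,
scalar multiplication and the componentwise coordinatewise product) every nonzero element of
which is a common hypercyclic vector for the family. -/
def CommonHypercyclicAlgebraCW (p : ℝ≥0∞) [Fact (1 ≤ p)] (d : ℕ) (S : Set (Fin d → ℝ))
    (T : (Fin d → ℝ) → ((Fin d → lpC p) →L[ℂ] (Fin d → lpC p))) : Prop :=
  ∃ A : Set (Fin d → lpC p),
    (0 : Fin d → lpC p) ∈ A ∧
    (∀ x ∈ A, ∀ y ∈ A, x + y ∈ A) ∧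
    (∀ (c : ℂ), ∀ x ∈ A, c • x ∈ A) ∧
    (∀ x ∈ A, ∀ y ∈ A, ∃ z ∈ A, ∀ (i : Fin d) (n : ℕ), z i n = x i n * y i n) ∧
    (∃ x ∈ A, x ≠ 0) ∧
    (∀ x ∈ A, x ≠ 0 → ∀ lam ∈ S, Dense (Set.range fun n : ℕ => ((T lam) ^ (n + 1)) x))

/-!
Write the curve as `γ s i = exp (f i s)` with `f i` Lipschitz and bounded below by some `κ > 0`.
By Baire's theorem it suffices to approximate, for each exponent `m`, each finitely supported `v`
and all parameters `s` at once, with a small block `w`: for every `s` some power `N` of the operator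
should send the coordinatewise power `w ^ (m + 1)` close to `v`. Compactness of the parameter set
makes the corresponding sets of vectors open.

Cut `[0, ∞)` into cells of length about `δ / (k + 1)`, and let the `(k + 1)`-st block of length `M`
of `w` be the `(m + 1)`-st root of `exp (-(k + 1) * M * f i (t k)) * v i`. For `s` in the `k`-th
cell and `N = (k + 1) * M`, the Lipschitz condition makes the first block of the image agree with
`v i` up to a factor `exp (± M * L * δ)`, while the `d`-th following block is of size at most
`exp (-d * M * (κ - L * δ))`. Both errors vanish for `δ = M⁻²` and `M → ∞`. The cell lengths are
comparable to the terms of a divergent series, so one choice of blocks serves the whole curve. This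
uses that the parameter is one-dimensional, but not how many shifts are multiplied.

Finally a polynomial `P = X ^ (m + 1) * Q` with `Q 0 ≠ 0` acts asymptotically like
`Q 0 * X ^ (m + 1)`, because the coordinates of `x` tend to `0`. Hence `P(x)` is hypercyclic for
every nonzero `P` without constant term, and these vectors form the algebra.
-/

open Filter Topology Polynomial

section Universality

variable {X Y P : Type*} [TopologicalSpace X] [TopologicalSpace Y] [TopologicalSpace P]

theorem eventually_residual_forall_mapClusterPt [SecondCountableTopology Y]
    {K : Set P} (hK : IsCompact K) {F : ℕ → P → X → Y}
    (hF : ∀ n, Continuous fun z : P × X => F n z.1 z.2)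
    (hdense : ∀ V : Set Y, IsOpen V → V.Nonempty → ∀ n₀,
      Dense {x | ∀ t ∈ K, ∃ n ≥ n₀, F n t x ∈ V}) :
    ∀ᶠ x in residual X, ∀ t ∈ K, ∀ y, MapClusterPt y atTop fun n => F n t x := by
  have hopen {V : Set Y} (hV : IsOpen V) (n₀ : ℕ) :
      IsOpen {x | ∀ t ∈ K, ∃ n ≥ n₀, F n t x ∈ V} := by
    refine isOpen_iff_eventually.2 fun x hx =>
      hK.eventually_forall_of_forall_eventually fun t ht => ?_
    obtain ⟨n, hn, hnV⟩ := hx t ht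
    filter_upwards [((hF n).comp continuous_swap).continuousAt.eventually_mem (hV.mem_nhds hnV)]
      with z hz using ⟨n, hn, hz⟩
  have hvisit : ∀ᶠ x in residual X, ∀ V ∈ TopologicalSpace.countableBasis Y, ∀ n₀,
      ∀ t ∈ K, ∃ n ≥ n₀, F n t x ∈ V := by
    refine (eventually_countable_ball (TopologicalSpace.countable_countableBasis Y)).2
      fun V hV => eventually_countable_forall.2 fun n₀ => ?_
    have hVo := TopologicalSpace.isOpen_of_mem_countableBasis hV
    exact residual_of_dense_open (hopen hVo n₀)
      (hdense V hVo (TopologicalSpace.nonempty_of_mem_countableBasis hV) n₀)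
  filter_upwards [hvisit] with x hx t ht y
  refine mapClusterPt_iff_frequently.2 fun s hs => frequently_atTop.2 fun n₀ => ?_
  obtain ⟨V, hV, -, hVs⟩ := (TopologicalSpace.isBasis_countableBasis Y).exists_subset_of_mem_open
    (mem_interior_iff_mem_nhds.2 hs) isOpen_interior
  obtain ⟨n, hn, hnV⟩ := hx V hV n₀ t ht
  exact ⟨n, hn, interior_subset (hVs hnV)⟩

theorem dense_range_succ_of_mapClusterPt {u : ℕ → Y} (h : ∀ y, MapClusterPt y atTop u) :
    Dense (Set.range fun n => u (n + 1)) := by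
  refine dense_iff_inter_open.2 fun V hV ⟨y, hy⟩ => ?_
  obtain ⟨n, hn, hnV⟩ := frequently_atTop.1 ((h y).frequently (hV.mem_nhds hy)) 1
  exact ⟨u n, hnV, n - 1, by simp only [Nat.sub_add_cancel hn]⟩

end Universality

theorem mapClusterPt_smul_of_isLittleO {α 𝕜 E : Type*} [NormedField 𝕜] [NormedAddCommGroup E]
    [NormedSpace 𝕜 E] {l : Filter α} {y z : α → E} {v : E} {c : 𝕜}
    (hz : MapClusterPt v l z) (h : (fun a => y a - c • z a) =o[l] z) :
    MapClusterPt (c • v) l y := by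
  obtain ⟨U, hU, hzU⟩ := mapClusterPt_iff_ultrafilter.1 hz
  have hsub : Tendsto (fun a => y a - c • z a) U (𝓝 0) :=
    ((h.mono hU).trans_isBigO (hzU.isBigO_one ℝ)).tendsto_zero_of_tendsto tendsto_const_nhds
  refine mapClusterPt_iff_ultrafilter.2 ⟨U, hU, ?_⟩
  simpa only [sub_add_cancel, zero_add] using hsub.add (hzU.const_smul c)

section Sequences

variable {ι : Type*} {E : ι → Type*} [∀ i, NormedAddCommGroup (E i)] {p : ℝ≥0∞} [Fact (1 ≤ p)]

theorem separableSpace_lp [Countable ι] [∀ i, TopologicalSpace.SeparableSpace (E i)]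
    (hp : p ≠ ⊤) : TopologicalSpace.SeparableSpace (lp E p) := by
  classical
  refine TopologicalSpace.isSeparable_univ_iff.1 (.mono (TopologicalSpace.IsSeparable.closure
    (TopologicalSpace.IsSeparable.span (R := ℤ) (.iUnion fun i =>
      TopologicalSpace.isSeparable_range (lp.isometry_single i).continuous))) fun x _ => ?_)
  exact mem_closure_of_tendsto (lp.hasSum_single hp x) (.of_forall fun s => sum_mem fun i _ =>
    Submodule.subset_span (Set.mem_iUnion.2 ⟨i, Set.mem_range_self _⟩))

theorem memℓp_of_summable_norm {x : ∀ i, E i} (hx : Summable fun i => ‖x i‖) : Memℓp x p :=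
  have hx1 : Memℓp x 1 := memℓp_gen (by simpa only [ENNReal.toReal_one, Real.rpow_one] using hx)
  hx1.of_exponent_ge Fact.out

theorem lp_norm_le_mul_of_forall_le [∀ i, NormedSpace ℝ (E i)] {C : ℝ} (hC : 0 ≤ C) {x y : lp E p}
    (h : ∀ i, ‖y i‖ ≤ C * ‖x i‖) : ‖y‖ ≤ C * ‖x‖ := by
  have hp0 : p ≠ 0 := (zero_lt_one.trans_le Fact.out).ne'
  rw [← Real.norm_of_nonneg hC, ← lp.norm_const_smul hp0]
  refine lp.norm_mono hp0 fun i => ?_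
  simpa only [lp.coeFn_smul, Pi.smul_apply, norm_smul, Real.norm_of_nonneg hC] using h i

theorem lp_norm_le_of_hasSum (hp : p ≠ ⊤) {x : lp E p} {g : ι → ℝ} {S : ℝ} (hg : HasSum g S)
    (hx : ∀ i, ‖x i‖ ≤ g i) : ‖x‖ ≤ S := by
  classical
  rw [← (lp.hasSum_single hp x).tsum_eq]
  refine tsum_of_norm_bounded hg fun i => ?_
  rw [lp.norm_single (zero_lt_one.trans_le Fact.out)]
  exact hx i

theorem lp_tendsto_cofinite_zero (hp : p ≠ ⊤) (x : lp E p) :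
    Tendsto (fun i => ‖x i‖) cofinite (𝓝 0) := by
  classical
  have h := (lp.hasSum_single hp x).summable.tendsto_cofinite_zero.norm
  simpa only [lp.norm_single (zero_lt_one.trans_le (Fact.out : 1 ≤ p)), norm_zero] using h

theorem memℓp_comp_injective {κ F : Type*} [NormedAddCommGroup F] {x : ι → F} (hx : Memℓp x p)
    {e : κ → ι} (he : Function.Injective e) : Memℓp (x ∘ e) p := by
  rcases p.dichotomy with rfl | hp
  · exact memℓp_infty (hx.bddAbove.mono (Set.range_comp_subset_range e fun i => ‖x i‖))
  · exact memℓp_gen ((hx.summable (zero_lt_one.trans_le hp)).comp_injective he)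

theorem lp_norm_comp_le {κ F : Type*} [NormedAddCommGroup F] {x : lp (fun _ : ι => F) p}
    {y : lp (fun _ : κ => F) p} (e : κ ↪ ι) (hy : ∀ k, y k = x (e k)) : ‖y‖ ≤ ‖x‖ := by
  rcases p.dichotomy with rfl | hp
  · refine lp.norm_le_of_forall_le (norm_nonneg x) fun k => ?_
    exact hy k ▸ lp.norm_apply_le_norm ENNReal.top_ne_zero x (e k)
  · have hp0 := zero_lt_one.trans_le hp
    refine lp.norm_le_of_forall_sum_le hp0 (norm_nonneg x) fun s => ?_
    simpa only [hy, sum_map] using lp.sum_rpow_le_norm_rpow hp0 x (s.map e)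

end Sequences

section Operators

variable {p : ℝ≥0∞} [Fact (1 ≤ p)]

/-- The unweighted backward shift `B` on `ℓᵖ(ℕ)`. -/
def backwardShift : lpC p →L[ℂ] lpC p :=
  LinearMap.mkContinuous
    { toFun x := ⟨x ∘ Nat.succ, memℓp_comp_injective x.2 Nat.succ_injective⟩
      map_add' _ _ := rfl
      map_smul' _ _ := rfl }
    1 fun x => (lp_norm_comp_le ⟨Nat.succ, Nat.succ_injective⟩ fun _ => rfl).trans_eq
      (one_mul ‖x‖).symm

theorem backwardShift_pow_apply (x : lpC p) (N n : ℕ) :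
    ((backwardShift ^ N) x) n = x (N + n) := by
  induction N generalizing x with
  | zero => rw [pow_zero, one_apply_eq_self, Nat.zero_add]
  | succ N ih =>
    rw [pow_succ, mul_apply_eq_comp, ih, Nat.add_right_comm]
    rfl

/-- The coordinatewise product of `ℓᵖ(ℕ)` as a continuous bilinear map. -/
def coordMul : lpC p →L[ℂ] lpC p →L[ℂ] lpC p :=
  have hbound (x y : lpC p) (n : ℕ) : ‖x n * y n‖ ≤ ‖x‖ * ‖y n‖ := by
    rw [norm_mul]
    gcongr
    exact lp.norm_apply_le_norm (zero_lt_one.trans_le Fact.out).ne' x n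
  LinearMap.mkContinuous₂
    (LinearMap.mk₂ ℂ (fun x y => ⟨fun n => x n * y n,
        ((lp.memℓp y).norm.const_mul ‖x‖).mono (hbound x y)⟩)
      (fun _ _ _ => lp.ext (funext fun _ => add_mul _ _ _))
      (fun _ _ _ => lp.ext (funext fun _ => mul_assoc _ _ _))
      (fun _ _ _ => lp.ext (funext fun _ => mul_add _ _ _))
      (fun _ _ _ => lp.ext (funext fun _ => mul_left_comm _ _ _)))
    1 fun x y => (lp_norm_le_mul_of_forall_le (norm_nonneg x) (hbound x y)).trans_eq
      (by rw [one_mul])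

theorem coordMul_apply (x y : lpC p) (n : ℕ) : coordMul x y n = x n * y n := rfl

/-- The vector `P(x)` obtained by applying the polynomial `P = X * R` to every coordinate of
`x ∈ ℓᵖ(ℕ)`; polynomials without constant term are encoded by their quotient `R` by `X`. -/
def coordEval (R : ℂ[X]) (x : lpC p) : lpC p := aeval (coordMul x) R x

theorem coordEval_apply (R : ℂ[X]) (x : lpC p) (n : ℕ) :
    coordEval R x n = R.eval (x n) * x n := by
  have hpow (k : ℕ) (y : lpC p) : (coordMul x ^ k) y n = x n ^ k * y n := by
    induction k generalizing y with
    | zero => rw [pow_zero, pow_zero, one_apply_eq_self, one_mul]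
    | succ k ih => rw [pow_succ, mul_apply_eq_comp, ih, coordMul_apply, pow_succ, mul_assoc]
  induction R using Polynomial.induction_on' with
  | add R S hR hS =>
    rw [eval_add, add_mul, ← hR, ← hS, coordEval, map_add]
    rfl
  | monomial k a =>
    rw [coordEval, aeval_monomial, eval_monomial, mul_assoc, ← hpow, mul_apply_eq_comp,
      ContinuousLinearMap.algebraMap_apply]
    rfl

theorem coordEval_one (x : lpC p) : coordEval 1 x = x := by
  rw [coordEval, map_one, one_apply_eq_self]

theorem continuous_coordEval (R : ℂ[X]) : Continuous (coordEval R : lpC p → lpC p) :=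
  (R.continuous_aeval.comp coordMul.continuous).clm_apply continuous_id

/-- The vectors of `ℓᵖ(ℕ)^ι` all of whose components vanish beyond a common index. -/
def finitelySupported (ι : Type*) (p : ℝ≥0∞) : Set (ι → lpC p) :=
  {x | ∃ q, ∀ i n, q ≤ n → x i n = 0}

theorem dense_finitelySupported (ι : Type*) (hp : p ≠ ⊤) : Dense (finitelySupported ι p) := by
  intro x
  have htrunc : Tendsto (fun (q : ℕ) i => ∑ k ∈ range q, lp.single p k (x i k)) atTop (𝓝 x) :=
    tendsto_pi_nhds.2 fun i => (lp.hasSum_single hp (x i)).tendsto_sum_nat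
  refine mem_closure_of_tendsto htrunc (.of_forall fun q => ⟨q, fun i n hn => ?_⟩)
  rw [lp.coeFn_sum, Finset.sum_apply]
  exact sum_eq_zero fun k hk =>
    lp.single_apply_ne p k _ (((mem_range.1 hk).trans_le hn).ne')

section ProductShift

variable {ι : Type*}

/-- The product of the weighted shifts `c i • B`, acting on `ℓᵖ(ℕ)^ι`. -/
def productShift (c : ι → ℂ) : (ι → lpC p) →L[ℂ] (ι → lpC p) :=
  .piMap fun i => c i • backwardShift

theorem productShift_apply (c : ι → ℂ) (x : ι → lpC p) (i : ι) :
    productShift c x i = c i • backwardShift (x i) := rfl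

theorem productShift_pow_apply (c : ι → ℂ) (N : ℕ) (x : ι → lpC p) (i : ι) :
    (productShift c ^ N) x i = c i ^ N • (backwardShift ^ N) (x i) := by
  induction N generalizing x with
  | zero => rw [pow_zero, pow_zero, pow_zero, one_apply_eq_self, one_apply_eq_self, one_smul]
  | succ N ih =>
    rw [pow_succ, mul_apply_eq_comp, ih, productShift_apply, map_smul, smul_smul, pow_succ,
      pow_succ, mul_apply_eq_comp]

theorem productShift_pow_apply_apply (c : ι → ℂ) (N : ℕ) (x : ι → lpC p) (i : ι) (n : ℕ) :
    (productShift c ^ N) x i n = c i ^ N * x i (N + n) := by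
  rw [productShift_pow_apply, lp.coeFn_smul, Pi.smul_apply, backwardShift_pow_apply, smul_eq_mul]

theorem IsProductShift.eq_productShift {d : ℕ} {T : (Fin d → lpC p) →L[ℂ] (Fin d → lpC p)}
    {c : Fin d → ℝ} (hT : IsProductShift p d (fun a _ => a) T c) :
    T = productShift fun i => (c i : ℂ) := by
  ext x i n
  rw [hT, ← pow_one (productShift _), productShift_pow_apply_apply, pow_one, Nat.add_comm]

theorem isLittleO_productShift_pow_coordEval [Fintype ι] (hp : p ≠ ⊤) (c : ι → ℂ)
    (x : ι → lpC p) (m : ℕ) (Q : ℂ[X]) :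
    (fun N => (productShift c ^ N) (fun i => coordEval (X ^ m * Q) (x i)) -
        Q.eval 0 • (productShift c ^ N) (fun i => coordEval (X ^ m) (x i))) =o[atTop]
      fun N => (productShift c ^ N) fun i => coordEval (X ^ m) (x i) := by
  have hQ (i : ι) : Tendsto (fun n => Q.eval (x i n)) atTop (𝓝 (Q.eval 0)) :=
    Q.continuous.tendsto 0 |>.comp <| tendsto_zero_iff_norm_tendsto_zero.2 <|
      Nat.cofinite_eq_atTop ▸ lp_tendsto_cofinite_zero hp (x i)
  refine Asymptotics.isLittleO_iff.2 fun ε hε => ?_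
  have hclose : ∀ᶠ N in atTop, ∀ n ≥ N, ∀ i, ‖Q.eval (x i n) - Q.eval 0‖ ≤ ε := by
    refine eventually_forall_ge_atTop.2 (eventually_all.2 fun i => ?_)
    simpa only [dist_eq_norm] using
      (Metric.tendsto_nhds.1 (hQ i) ε hε).mono fun n hn => hn.le
  filter_upwards [hclose] with N hN
  refine (pi_norm_le_iff_of_nonneg (by positivity)).2 fun i => ?_
  refine (lp_norm_le_mul_of_forall_le hε.le fun n => ?_).trans
    (mul_le_mul_of_nonneg_left (norm_le_pi_norm
      ((productShift c ^ N) fun i => coordEval (X ^ m) (x i)) i) hε.le)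
  rw [Pi.sub_apply, lp.coeFn_sub, Pi.sub_apply, Pi.smul_apply, lp.coeFn_smul, Pi.smul_apply,
    productShift_pow_apply_apply, productShift_pow_apply_apply, coordEval_apply, coordEval_apply,
    eval_mul, smul_eq_mul]
  calc _ = ‖(Q.eval (x i (N + n)) - Q.eval 0) *
          (c i ^ N * ((X ^ m : ℂ[X]).eval (x i (N + n)) * x i (N + n)))‖ := by ring_nf
    _ ≤ _ := by
      rw [norm_mul]
      gcongr
      exact hN _ le_self_add i

theorem mapClusterPt_productShift_pow_coordEval [Finite ι] (hp : p ≠ ⊤) {c : ι → ℂ}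
    {x : ι → lpC p}
    (hx : ∀ m v, MapClusterPt v atTop fun N =>
      (productShift c ^ N) fun i => coordEval (X ^ m) (x i))
    {R : ℂ[X]} (hR : R ≠ 0) (v : ι → lpC p) :
    MapClusterPt v atTop fun N => (productShift c ^ N) fun i => coordEval R (x i) := by
  have := Fintype.ofFinite ι
  obtain ⟨Q, hRQ, hQ⟩ := exists_eq_pow_rootMultiplicity_mul_and_not_dvd R hR 0
  rw [map_zero, sub_zero] at hRQ hQ
  rw [X_dvd_iff, coeff_zero_eq_eval_zero] at hQ
  have h := mapClusterPt_smul_of_isLittleO (hx _ ((Q.eval 0)⁻¹ • v))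
    (isLittleO_productShift_pow_coordEval hp c x (R.rootMultiplicity 0) Q)
  rwa [smul_inv_smul₀ hQ, ← hRQ] at h

end ProductShift

end Operators

section LogGrid

/-- `t` is a partition of `[0, ∞)` whose `k`-th mesh is of order `δ / (k + 1)`: meshes multiplied
by `k + 1` stay below `δ`, yet the partition reaches infinity because the harmonic series
diverges. On the `k`-th cell a power of the operator proportional to `k + 1` is approximated by
its value at the parameter `t k`. -/
structure IsLogGrid (δ : ℝ) (t : ℕ → ℝ) : Prop where
  monotone : Monotone t
  spacing : ∀ k d : ℕ, (k + 1) * (t (k + d) - t k) ≤ δ * d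
  exists_mem : ∀ s, 0 ≤ s → ∃ k, s ∈ Set.Icc (t k) (t (k + 1))

theorem exists_isLogGrid {δ : ℝ} (hδ : 0 < δ) : ∃ t, IsLogGrid δ t := by
  have hmono : Monotone fun k => δ * ∑ i ∈ range k, 1 / ((i : ℝ) + 1) :=
    monotone_nat_of_le_succ fun k => by
      rw [sum_range_succ]
      gcongr
      exact le_add_of_nonneg_right (by positivity)
  refine ⟨fun k => δ * ∑ i ∈ range k, 1 / ((i : ℝ) + 1), hmono, fun k d => ?_, fun s hs => ?_⟩
  · calc (k + 1) * (δ * ∑ i ∈ range (k + d), 1 / ((i : ℝ) + 1)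
          - δ * ∑ i ∈ range k, 1 / ((i : ℝ) + 1))
        = δ * ∑ j ∈ range d, (k + 1) * (1 / (((k + j : ℕ) : ℝ) + 1)) := by
          rw [sum_range_add, ← mul_sum]; ring
      _ ≤ δ * ∑ _j ∈ range d, 1 := by
          gcongr with j
          rw [mul_one_div, div_le_one (by positivity)]
          push_cast
          linarith [(Nat.cast_nonneg j : (0 : ℝ) ≤ j)]
      _ = δ * d := by rw [sum_const, card_range, nsmul_one]
  · have hex : ∃ k, s < δ * ∑ i ∈ range k, 1 / ((i : ℝ) + 1) :=
      ((Real.tendsto_sum_range_one_div_nat_succ_atTop.const_mul_atTop hδ).eventually_gt_atTop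
        s).exists
    obtain ⟨k, hk, hk'⟩ := Nat.exists_not_and_succ_of_not_zero_of_exists
      (by simpa only [range_zero, sum_empty, mul_zero, not_lt] using hs) hex
    exact ⟨k, not_lt.1 hk, hk'.le⟩

theorem IsLogGrid.mul_abs_sub_le {δ : ℝ} {t : ℕ → ℝ} (ht : IsLogGrid δ t) {f : ℝ → ℝ} {L : NNReal}
    (hf : LipschitzWith L f) {k : ℕ} {s : ℝ} (hs : s ∈ Set.Icc (t k) (t (k + 1))) {d e : ℕ}
    (hde : d ≤ e) (he : 1 ≤ e) : (k + 1) * |f s - f (t (k + d))| ≤ L * δ * e := by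
  have hdist : |s - t (k + d)| ≤ t (k + e) - t k := by
    have h₁ := ht.monotone (Nat.le_add_right k d)
    have h₂ := ht.monotone (Nat.add_le_add_left hde k)
    have h₃ := ht.monotone (Nat.add_le_add_left he k)
    exact abs_sub_le_iff.2 ⟨by linarith [hs.2], by linarith [hs.1]⟩
  calc (k + 1) * |f s - f (t (k + d))| ≤ (k + 1) * (L * (t (k + e) - t k)) := by
        gcongr
        exact (hf.dist_le_mul s _).trans (mul_le_mul_of_nonneg_left hdist L.2)
    _ = L * ((k + 1) * (t (k + e) - t k)) := by ring
    _ ≤ L * (δ * e) := mul_le_mul_of_nonneg_left (ht.spacing k e) L.2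
    _ = L * δ * e := by ring

end LogGrid

section Blocks

/-- The tensor product of two sequences: the sequence whose `k`-th block of length `M` is `r k`
times the first `M` terms of `u`. -/
def blockSeq {R : Type*} [Mul R] (M : ℕ) (r u : ℕ → R) (n : ℕ) : R :=
  r (n / M) * u (n % M)

theorem blockSeq_mul_add {R : Type*} [Mul R] (M : ℕ) [NeZero M] (r u : ℕ → R) (k n : ℕ) :
    blockSeq M r u (k * M + n) = blockSeq M (fun d => r (k + d)) u n := by
  rw [blockSeq, blockSeq, Nat.mul_add_mod', Nat.add_comm, Nat.add_mul_div_right _ _ (NeZero.pos M),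
    Nat.add_comm]

theorem hasSum_blockSeq (M : ℕ) [NeZero M] {r : ℕ → ℝ} {S : ℝ} (hr : HasSum r S) (u : ℕ → ℝ) :
    HasSum (blockSeq M r u) (S * ∑ j ∈ range M, u j) := by
  rw [← Fin.sum_univ_eq_sum_range]
  have hu := hasSum_fintype fun j : Fin M => u j
  exact (Nat.divModEquiv M).hasSum_iff.2
    (hr.mul hu (summable_mul_of_summable_norm hr.summable.norm hu.summable.norm))

variable {p : ℝ≥0∞} [Fact (1 ≤ p)]

theorem memℓp_blockSeq (M : ℕ) [NeZero M] {r : ℕ → ℂ} (hr : Summable fun k => ‖r k‖) (u : ℕ → ℂ) :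
    Memℓp (blockSeq M r u) p :=
  memℓp_of_summable_norm <| (hasSum_blockSeq M hr.hasSum fun j => ‖u j‖).summable.congr
    fun _ => (norm_mul _ _).symm

theorem norm_le_of_eq_blockSeq (hp : p ≠ ⊤) {M q : ℕ} [NeZero M] (hqM : q ≤ M) {r u : ℕ → ℂ}
    (hu : ∀ j ≥ q, u j = 0) {x : lpC p} (hx : ⇑x = blockSeq M r u) {g : ℕ → ℝ} {S : ℝ}
    (hr : ∀ k, ‖r k‖ ≤ g k) (hg : HasSum g S) : ‖x‖ ≤ S * ∑ j ∈ range q, ‖u j‖ := by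
  rw [← eventually_constant_sum (fun j hj => norm_eq_zero.2 (hu j hj)) hqM]
  refine lp_norm_le_of_hasSum hp (hasSum_blockSeq M hg fun j => ‖u j‖) fun n => ?_
  rw [hx, blockSeq, norm_mul]
  exact mul_le_mul_of_nonneg_right (hr _) (norm_nonneg _)

/-- The weights of the successive blocks: the zeroth block is void and the `(k + 1)`-st one is
the `(m + 1)`-st root of `exp (-a k)`. With `a k = (k + 1) * M * f (t k)`, the power `(k + 1) * M`
of `exp (f (t k)) • B` brings the `(m + 1)`-st power of that block back to size `1`. -/
def blockWeight (m : ℕ) (a : ℕ → ℝ) : ℕ → ℂ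
  | 0 => 0
  | k + 1 => Real.exp (-a k / (m + 1))

theorem blockWeight_succ_pow (m : ℕ) (a : ℕ → ℝ) (k : ℕ) :
    blockWeight m a (k + 1) ^ (m + 1) = Real.exp (-a k) := by
  rw [blockWeight, ← Complex.ofReal_pow, ← Real.exp_nat_mul]
  push_cast
  rw [mul_div_cancel₀ _ (Nat.cast_add_one_ne_zero m)]

theorem coe_smul_shift_coordEval_sub {M m : ℕ} [NeZero M] {a : ℕ → ℝ} {u : ℕ → ℂ} {b v : lpC p}
    (hb : ⇑b = blockSeq M (blockWeight m a) u) (hu : ∀ j, u j ^ (m + 1) = v j)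
    (hv : ∀ j ≥ M, v j = 0) (c : ℝ) (k : ℕ) :
    ⇑((Real.exp c : ℂ) ^ ((k + 1) * M) • (backwardShift ^ ((k + 1) * M)) (coordEval (X ^ m) b) - v)
      = blockSeq M (fun d => (Real.exp ((k + 1) * M * c - a (k + d)) : ℂ) - if d = 0 then 1 else 0)
          v := by
  have hv_block (n : ℕ) : v n = blockSeq M (fun d => if d = 0 then 1 else 0) v n := by
    by_cases hn : n / M = 0
    · rw [blockSeq, if_pos hn, one_mul,
        Nat.mod_eq_of_lt ((Nat.div_eq_zero_iff_lt (NeZero.pos M)).1 hn)]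
    · rw [blockSeq, if_neg hn, zero_mul, hv n (not_lt.1 (mt Nat.div_eq_of_lt hn))]
  funext n
  rw [lp.coeFn_sub, Pi.sub_apply, lp.coeFn_smul, Pi.smul_apply, backwardShift_pow_apply,
    coordEval_apply, eval_pow, eval_X, ← pow_succ, hb, blockSeq_mul_add, hv_block n]
  simp only [blockSeq]
  rw [mul_pow, hu, add_right_comm, blockWeight_succ_pow, smul_eq_mul, sub_mul, ← mul_assoc,
    ← Complex.ofReal_pow, ← Complex.ofReal_mul, ← Real.exp_nat_mul, ← Real.exp_add]
  push_cast
  rfl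

end Blocks

section Approximation

variable {p : ℝ≥0∞} [Fact (1 ≤ p)]

theorem abs_exp_sub_one_le {x y : ℝ} (h : |x| ≤ y) : |Real.exp x - 1| ≤ Real.exp y - 1 := by
  have hxy := Real.exp_le_exp.2 ((le_abs_self x).trans h)
  have hyx := Real.exp_le_exp.2 (neg_le.1 ((neg_le_abs x).trans h))
  have hcosh : 2 ≤ Real.exp y + Real.exp (-y) := by
    linarith [Real.one_le_cosh y, Real.cosh_eq y]
  exact abs_sub_le_iff.2 ⟨by linarith, by linarith⟩

theorem hasSum_of_forall_succ_eq_pow {g : ℕ → ℝ} {θ : ℝ} (h0 : 0 ≤ θ) (h1 : θ < 1)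
    (hg : ∀ k, g (k + 1) = θ ^ (k + 1)) : HasSum g (g 0 + θ * (1 - θ)⁻¹) := by
  refine HasSum.zero_add ?_
  simpa only [hg, pow_succ'] using (hasSum_geometric_of_lt_one h0 h1).mul_left θ

theorem IsLogGrid.norm_exp_sub_le {δ : ℝ} {t : ℕ → ℝ} (ht : IsLogGrid δ t) {f : ℝ → ℝ}
    {L : NNReal} (hf : LipschitzWith L f) {κ : ℝ} (hκ : ∀ s, κ ≤ f s) {k : ℕ} {s : ℝ}
    (hs : s ∈ Set.Icc (t k) (t (k + 1))) (M d : ℕ) :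
    ‖(Real.exp ((k + 1) * M * f s - ((k + d : ℕ) + 1) * M * f (t (k + d))) : ℂ)
        - if d = 0 then 1 else 0‖ ≤
      if d = 0 then Real.exp (M * (L * δ)) - 1 else Real.exp (M * (L * δ - κ)) ^ d := by
  rcases Nat.eq_zero_or_pos d with rfl | hd
  · have h := ht.mul_abs_sub_le hf hs zero_le_one le_rfl
    rw [Nat.cast_one, mul_one, Nat.add_zero] at h
    rw [if_pos rfl, if_pos rfl, ← Complex.ofReal_one, ← Complex.ofReal_sub, Complex.norm_real]
    refine abs_exp_sub_one_le ?_
    calc |(k + 1) * M * f s - ((k : ℝ) + 1) * M * f (t k)|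
        = M * ((k + 1) * |f s - f (t k)|) := by
          rw [← mul_sub, abs_mul, abs_of_nonneg (by positivity)]; ring
      _ ≤ M * (L * δ) := by gcongr
  · have h := (mul_le_mul_of_nonneg_left (le_abs_self _) (by positivity)).trans
      (ht.mul_abs_sub_le hf hs le_rfl hd)
    have hκd := mul_le_mul_of_nonneg_left (hκ (t (k + d))) (Nat.cast_nonneg (α := ℝ) d)
    rw [if_neg hd.ne', if_neg hd.ne', sub_zero, Complex.norm_real,
      Real.norm_of_nonneg (Real.exp_pos _).le, ← Real.exp_nat_mul, Real.exp_le_exp]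
    calc (k + 1) * M * f s - (((k + d : ℕ) : ℝ) + 1) * M * f (t (k + d))
        = M * ((k + 1) * (f s - f (t (k + d))) - d * f (t (k + d))) := by push_cast; ring
      _ ≤ M * (L * δ * d - d * κ) := mul_le_mul_of_nonneg_left (sub_le_sub h hκd) M.cast_nonneg
      _ = d * (M * (L * δ - κ)) := by ring

theorem norm_smul_shift_coordEval_sub_le (hp : p ≠ ⊤) {f : ℝ → ℝ} {L : NNReal}
    (hf : LipschitzWith L f) {κ : ℝ} (hκ : ∀ s, κ ≤ f s) {δ : ℝ} {t : ℕ → ℝ} (ht : IsLogGrid δ t)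
    {M q m : ℕ} [NeZero M] (hqM : q ≤ M) {u : ℕ → ℂ} {b v : lpC p}
    (hb : ⇑b = blockSeq M (blockWeight m fun k => (k + 1) * M * f (t k)) u)
    (hu : ∀ j, u j ^ (m + 1) = v j) (hv : ∀ j ≥ q, v j = 0)
    (hθ : Real.exp (M * (L * δ - κ)) < 1) {k : ℕ} {s : ℝ} (hs : s ∈ Set.Icc (t k) (t (k + 1))) :
    ‖(Real.exp (f s) : ℂ) ^ ((k + 1) * M) • (backwardShift ^ ((k + 1) * M))
        (coordEval (X ^ m) b) - v‖ ≤
      (Real.exp (M * (L * δ)) - 1 + Real.exp (M * (L * δ - κ)) *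
        (1 - Real.exp (M * (L * δ - κ)))⁻¹) * ∑ j ∈ range q, ‖v j‖ :=
  norm_le_of_eq_blockSeq hp hqM hv
    (coe_smul_shift_coordEval_sub hb hu (fun j hj => hv j (hqM.trans hj)) (f s) k)
    (ht.norm_exp_sub_le hf hκ hs M)
    (hasSum_of_forall_succ_eq_pow (Real.exp_pos _).le hθ fun _ => if_neg (Nat.succ_ne_zero _))

theorem norm_blockWeight_le {m : ℕ} {a : ℕ → ℝ} {α : ℝ} (ha : ∀ k : ℕ, (k + 1) * α ≤ a k) (k : ℕ) :
    ‖blockWeight m a k‖ ≤ if k = 0 then 0 else Real.exp (-α / (m + 1)) ^ k := by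
  cases k with
  | zero => rw [blockWeight, norm_zero, if_pos rfl]
  | succ k =>
    rw [blockWeight, Complex.norm_real, Real.norm_of_nonneg (Real.exp_pos _).le,
      if_neg (Nat.succ_ne_zero k), ← Real.exp_nat_mul, Real.exp_le_exp, mul_div_assoc', mul_neg]
    push_cast
    gcongr
    exact ha k

theorem tendsto_mul_inv_one_sub_nhds_zero {θ : ℕ → ℝ} (hθ : Tendsto θ atTop (𝓝 0)) :
    Tendsto (fun M => θ M * (1 - θ M)⁻¹) atTop (𝓝 0) := by
  have h := hθ.mul ((hθ.const_sub 1).inv₀ (by norm_num))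
  rwa [zero_mul] at h

theorem tendsto_nat_mul_mul_inv_sq (L : ℝ) :
    Tendsto (fun M : ℕ => M * (L * ((M : ℝ)⁻¹ ^ 2))) atTop (𝓝 0) := by
  have h := (tendsto_inv_atTop_nhds_zero_nat (𝕜 := ℝ)).const_mul L
  rw [mul_zero] at h
  refine h.congr' ?_
  filter_upwards [eventually_ne_atTop 0] with M hM
  field_simp

theorem tendsto_exp_nat_mul_mul_inv_sq_sub (L : ℝ) {κ : ℝ} (hκ : 0 < κ) :
    Tendsto (fun M : ℕ => Real.exp (M * (L * ((M : ℝ)⁻¹ ^ 2) - κ))) atTop (𝓝 0) := by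
  simp only [mul_sub]
  exact Real.tendsto_exp_atBot.comp ((tendsto_nat_mul_mul_inv_sq L).add_atBot
    (tendsto_neg_atTop_atBot.comp (tendsto_natCast_atTop_atTop.atTop_mul_const hκ)))

theorem tendsto_exp_neg_nat_mul_div {κ : ℝ} (hκ : 0 < κ) (m : ℕ) :
    Tendsto (fun M : ℕ => Real.exp (-(M * κ) / (m + 1))) atTop (𝓝 0) :=
  Real.tendsto_exp_atBot.comp ((tendsto_neg_atTop_atBot.comp
    (tendsto_natCast_atTop_atTop.atTop_mul_const hκ)).atBot_div_const (by positivity))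

theorem eventually_exists_universal_block (hp : p ≠ ⊤) {f : ℝ → ℝ} {L : NNReal}
    (hf : LipschitzWith L f) {κ : ℝ} (hκ0 : 0 < κ) (hκ : ∀ s, κ ≤ f s) {q : ℕ} {v : lpC p}
    (hv : ∀ j ≥ q, v j = 0) (m : ℕ) {ε : ℝ} (hε : 0 < ε) :
    ∀ᶠ M : ℕ in atTop, ∀ t, IsLogGrid ((M : ℝ)⁻¹ ^ 2) t → ∃ b : lpC p, ‖b‖ < ε ∧
      ∀ k, ∀ s ∈ Set.Icc (t k) (t (k + 1)), ‖(Real.exp (f s) : ℂ) ^ ((k + 1) * M) •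
        (backwardShift ^ ((k + 1) * M)) (coordEval (X ^ m) b) - v‖ < ε := by
  choose u hu using fun j => IsAlgClosed.exists_pow_nat_eq (v j) (Nat.succ_pos m)
  have hu0 : ∀ j ≥ q, u j = 0 := fun j hj => pow_eq_zero_iff (Nat.succ_ne_zero m) |>.1 <|
    (hu j).trans (hv j hj)
  have hθ := tendsto_exp_nat_mul_mul_inv_sq_sub L hκ0
  have herror := (((Real.continuous_exp.tendsto 0).comp (tendsto_nat_mul_mul_inv_sq L)).sub_const
    1).add (tendsto_mul_inv_one_sub_nhds_zero hθ) |>.mul_const (∑ j ∈ range q, ‖v j‖)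
  have hϑ := tendsto_exp_neg_nat_mul_div hκ0 m
  have hsize := (tendsto_mul_inv_one_sub_nhds_zero hϑ).mul_const (∑ j ∈ range q, ‖u j‖)
  simp only [Real.exp_zero, sub_self, add_zero, zero_mul] at herror hsize
  filter_upwards [eventually_ge_atTop q, eventually_gt_atTop 0, hθ.eventually_lt_const one_pos,
    hϑ.eventually_lt_const one_pos, herror.eventually_lt_const hε, hsize.eventually_lt_const hε]
    with M hqM hM hθ1 hϑ1 herr hsz t ht
  have : NeZero M := ⟨hM.ne'⟩
  set a : ℕ → ℝ := fun k => (k + 1) * M * f (t k)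
  have ha (k : ℕ) : (k + 1) * (M * κ) ≤ a k := by
    rw [← mul_assoc]
    exact mul_le_mul_of_nonneg_left (hκ _) (by positivity)
  have hgeom := hasSum_of_forall_succ_eq_pow
    (g := fun k => if k = 0 then 0 else Real.exp (-(M * κ) / (m + 1)) ^ k) (Real.exp_pos _).le
    hϑ1 fun _ => if_neg (Nat.succ_ne_zero _)
  rw [if_pos rfl, zero_add] at hgeom
  have hsum := hgeom.summable.of_nonneg_of_le (fun _ => norm_nonneg _) (norm_blockWeight_le ha)
  refine ⟨⟨_, memℓp_blockSeq M hsum u⟩, ?_, fun k s hs => ?_⟩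
  · exact (norm_le_of_eq_blockSeq hp hqM hu0 rfl (norm_blockWeight_le ha) hgeom).trans_lt hsz
  · exact (norm_smul_shift_coordEval_sub_le hp hf hκ ht hqM rfl hu hv hθ1 hs).trans_lt herr

theorem exists_universal_block {ι : Type*} [Fintype ι] (hp : p ≠ ⊤) {f : ι → ℝ → ℝ} {L : NNReal}
    (hf : ∀ i, LipschitzWith L (f i)) {κ : ℝ} (hκ0 : 0 < κ) (hκ : ∀ i s, κ ≤ f i s)
    {v : ι → lpC p} (hv : v ∈ finitelySupported ι p) (m : ℕ) {ε : ℝ} (hε : 0 < ε) (n₀ : ℕ) :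
    ∃ w : ι → lpC p, ‖w‖ < ε ∧ ∀ s, 0 ≤ s → ∃ N ≥ n₀,
      ‖(productShift (fun i => (Real.exp (f i s) : ℂ)) ^ N) (fun i => coordEval (X ^ m) (w i)) - v‖
        < ε := by
  obtain ⟨q, hq⟩ := hv
  obtain ⟨M, hblock, hMn₀, hM⟩ := ((eventually_all.2 fun i =>
    eventually_exists_universal_block hp (hf i) hκ0 (hκ i) (hq i) m hε).and
      ((eventually_ge_atTop n₀).and (eventually_gt_atTop 0))).exists
  obtain ⟨t, ht⟩ := exists_isLogGrid (show 0 < (M : ℝ)⁻¹ ^ 2 by positivity)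
  choose w hw hwv using fun i => hblock i t ht
  refine ⟨w, (pi_norm_lt_iff hε).2 hw, fun s hs => ?_⟩
  obtain ⟨k, hk⟩ := ht.exists_mem s hs
  refine ⟨(k + 1) * M, hMn₀.trans (Nat.le_mul_of_pos_left M k.succ_pos),
    (pi_norm_lt_iff hε).2 fun i => ?_⟩
  rw [Pi.sub_apply, productShift_pow_apply]
  exact hwv i k s hk

end Approximation

section CommonVector

variable {p : ℝ≥0∞} [Fact (1 ≤ p)] {ι : Type*}

theorem productShift_pow_coordEval_add (c : ι → ℂ) (R : ℂ[X]) {x : ι → lpC p} {N : ℕ}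
    (hx : ∀ i n, N ≤ n → x i n = 0) (w : ι → lpC p) :
    (productShift c ^ N) (fun i => coordEval R ((x + w) i)) =
      (productShift c ^ N) fun i => coordEval R (w i) := by
  ext i n
  rw [productShift_pow_apply_apply, productShift_pow_apply_apply, coordEval_apply, coordEval_apply,
    Pi.add_apply, lp.coeFn_add, Pi.add_apply, hx i _ (Nat.le_add_right N n), zero_add]

variable [Finite ι] {f : ι → ℝ → ℝ} {L : NNReal} {κ : ℝ}

theorem dense_setOf_forall_exists_productShift_pow_mem (hp : p ≠ ⊤)
    (hf : ∀ i, LipschitzWith L (f i)) (hκ0 : 0 < κ) (hκ : ∀ i s, κ ≤ f i s) (m : ℕ)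
    {V : Set (ι → lpC p)} (hV : IsOpen V) (hVne : V.Nonempty) (n₀ : ℕ) :
    Dense {x : ι → lpC p | ∀ s, 0 ≤ s → ∃ N ≥ n₀,
      (productShift (fun i => (Real.exp (f i s) : ℂ)) ^ N)
        (fun i => coordEval (X ^ m) (x i)) ∈ V} := by
  have := Fintype.ofFinite ι
  obtain ⟨v, hv, hvV⟩ := (dense_finitelySupported ι hp).exists_mem_open hV hVne
  obtain ⟨ε, hε, hball⟩ := Metric.isOpen_iff.1 hV v hvV
  refine dense_closure.1 ((dense_finitelySupported ι hp).mono fun x hx => ?_)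
  obtain ⟨q, hq⟩ := hx
  refine Metric.mem_closure_iff.2 fun r hr => ?_
  obtain ⟨w, hw, hwv⟩ := exists_universal_block hp hf hκ0 hκ hv m (lt_min hr hε) (max q n₀)
  refine ⟨x + w, fun s hs => ?_, ?_⟩
  · obtain ⟨N, hN, hNv⟩ := hwv s hs
    refine ⟨N, (le_max_right _ _).trans hN, hball ?_⟩
    rw [productShift_pow_coordEval_add _ _ fun i n hn =>
      hq i n ((le_max_left _ _).trans (hN.trans hn)), mem_ball_iff_norm]
    exact hNv.trans_le (min_le_right _ _)
  · rw [dist_self_add_right]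
    exact hw.trans_le (min_le_left _ _)

theorem exists_common_universal_vector (hp : p ≠ ⊤) (hf : ∀ i, LipschitzWith L (f i)) (hκ0 : 0 < κ)
    (hκ : ∀ i s, κ ≤ f i s) {K : Set ℝ} (hK : IsCompact K) (hK0 : ∀ s ∈ K, 0 ≤ s) :
    ∃ x : ι → lpC p, ∀ s ∈ K, ∀ (m : ℕ) v, MapClusterPt v atTop fun N =>
      (productShift (fun i => (Real.exp (f i s) : ℂ)) ^ N) fun i => coordEval (X ^ m) (x i) := by
  have := separableSpace_lp (E := fun _ : ℕ => ℂ) hp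
  have := UniformSpace.secondCountable_of_separable (lpC p)
  let F (m N : ℕ) (s : ℝ) (x : ι → lpC p) : ι → lpC p :=
    (productShift (fun i => (Real.exp (f i s) : ℂ)) ^ N) fun i => coordEval (X ^ m) (x i)
  have hcont (m N : ℕ) : Continuous fun z : ℝ × (ι → lpC p) => F m N z.1 z.2 := by
    refine continuous_pi fun i => ?_
    simp only [F, productShift_pow_apply]
    have hfi := (hf i).continuous
    have hscalar : Continuous fun z : ℝ × (ι → lpC p) => (Real.exp (f i z.1) : ℂ) ^ N := by
      fun_prop
    have hshift := (backwardShift ^ N).continuous.comp (continuous_coordEval (p := p) (X ^ m))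
    exact hscalar.smul (hshift.comp ((continuous_apply i).comp continuous_snd))
  have hresidual (m : ℕ) : ∀ᶠ x in residual (ι → lpC p), ∀ s ∈ K, ∀ v,
      MapClusterPt v atTop fun N => F m N s x := by
    refine eventually_residual_forall_mapClusterPt (F := F m) hK (hcont m) fun V hV hVne n₀ => ?_
    refine (dense_setOf_forall_exists_productShift_pow_mem hp hf hκ0 hκ m hV hVne n₀).mono ?_
    exact fun x hx s hs => hx s (hK0 s hs)
  obtain ⟨x, hx⟩ := (dense_of_mem_residual (eventually_countable_forall.2 hresidual)).nonempty
  exact ⟨x, fun s hs m => hx m s hs⟩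

end CommonVector

section Curves

theorem lipschitzOnWith_log_Ici_one : LipschitzOnWith 1 Real.log (Set.Ici 1) := by
  refine LipschitzOnWith.of_le_add fun x hx y hy => ?_
  have hx0 : 0 < x := one_pos.trans_le hx
  have hy0 : 0 < y := one_pos.trans_le hy
  calc Real.log x = Real.log y + Real.log (x / y) := by
        rw [Real.log_div hx0.ne' hy0.ne', add_sub_cancel]
    _ ≤ Real.log y + (x / y - 1) := by gcongr; exact Real.log_le_sub_one_of_pos (div_pos hx0 hy0)
    _ ≤ Real.log y + dist x y := by
        gcongr
        rw [div_sub_one hy0.ne', Real.dist_eq]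
        exact (div_le_div_of_nonneg_right (le_abs_self _) hy0.le).trans
          (div_le_self (abs_nonneg _) hy)

theorem exists_lipschitzWith_log {ι : Type*} [Fintype ι] {a b : ℝ} (hab : a ≤ b) {γ : ℝ → ι → ℝ}
    {L : NNReal} (hγ : LipschitzOnWith L γ (Set.Icc a b))
    (hγ1 : ∀ s ∈ Set.Icc a b, ∀ i, 1 < γ s i) :
    ∃ f : ι → ℝ → ℝ, (∀ i, LipschitzWith L (f i)) ∧ (∃ κ > 0, ∀ i s, κ ≤ f i s) ∧
      ∀ s ∈ Set.Icc a b, ∀ i, γ s i = Real.exp (f i s) := by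
  have hlog (i : ι) : LipschitzOnWith L (fun s => Real.log (γ s i)) (Set.Icc a b) := by
    have hi := (LipschitzWith.eval i).comp_lipschitzOnWith hγ
    have := lipschitzOnWith_log_Ici_one.comp hi fun s hs => (hγ1 s hs i).le
    rwa [one_mul, one_mul] at this
  have hpos : ∀ᶠ κ in 𝓝[>] (0 : ℝ), ∀ i, ∀ s ∈ Set.Icc a b, κ ≤ Real.log (γ s i) := by
    refine eventually_all.2 fun i => ?_
    obtain ⟨s₀, hs₀, hmin⟩ := isCompact_Icc.exists_isMinOn (Set.nonempty_Icc.2 hab)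
      (hlog i).continuousOn
    filter_upwards [Ioc_mem_nhdsGT (Real.log_pos (hγ1 s₀ hs₀ i))] with κ hκ s hs
    exact hκ.2.trans (hmin hs)
  obtain ⟨κ, hκ, hκ0⟩ := (hpos.and self_mem_nhdsWithin).exists
  refine ⟨fun i s => Real.log (γ (Set.projIcc a b hab s) i), fun i => ?_,
    ⟨κ, hκ0, fun i s => hκ i _ (Set.projIcc a b hab s).2⟩, fun s hs i => ?_⟩
  · have := (hlog i).to_restrict.comp (LipschitzWith.projIcc hab)
    rwa [mul_one] at this
  · beta_reduce
    rw [Set.projIcc_of_mem hab hs, Real.exp_log (one_pos.trans (hγ1 s hs i))]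

end Curves

section Algebra

variable {p : ℝ≥0∞} [Fact (1 ≤ p)]

theorem nontrivial_lpC (p : ℝ≥0∞) : Nontrivial (lpC p) := by
  refine ⟨lp.single p 0 1, 0, fun h => one_ne_zero (α := ℂ) ?_⟩
  rw [← lp.single_apply_self (E := fun _ : ℕ => ℂ) p 0 1, h, lp.coeFn_zero, Pi.zero_apply]

theorem ne_zero_of_dense_orbit {E : Type*} [NormedAddCommGroup E] [NormedSpace ℂ E] [Nontrivial E]
    {A : E →L[ℂ] E} {x : E} (h : Dense (Set.range fun n : ℕ => (A ^ (n + 1)) x)) : x ≠ 0 := by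
  rintro rfl
  simp only [map_zero, Set.range_const, dense_iff_closure_eq, closure_singleton] at h
  exact Set.nontrivial_univ.ne_singleton h.symm

theorem commonHypercyclicAlgebraCW_of_forall_coordEval {d : ℕ} {S : Set (Fin d → ℝ)}
    {T : (Fin d → ℝ) → ((Fin d → lpC p) →L[ℂ] (Fin d → lpC p))} {x : Fin d → lpC p} (hx : x ≠ 0)
    (h : ∀ R : ℂ[X], R ≠ 0 → ∀ lam ∈ S,
      Dense (Set.range fun n : ℕ => ((T lam) ^ (n + 1)) fun i => coordEval R (x i))) :
    CommonHypercyclicAlgebraCW p d S T := by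
  refine ⟨Set.range fun (R : ℂ[X]) i => coordEval R (x i),
    ⟨0, ?_⟩, ?_, ?_, ?_, ⟨x, ⟨1, ?_⟩, hx⟩, ?_⟩
  · ext i n
    simp [coordEval_apply]
  · rintro _ ⟨P, rfl⟩ _ ⟨Q, rfl⟩
    refine ⟨P + Q, ?_⟩
    ext i n
    simp [coordEval_apply, add_mul]
  · rintro a _ ⟨P, rfl⟩
    refine ⟨a • P, ?_⟩
    ext i n
    simp [coordEval_apply, mul_assoc]
  · rintro _ ⟨P, rfl⟩ _ ⟨Q, rfl⟩
    refine ⟨_, ⟨P * X * Q, rfl⟩, fun i n => ?_⟩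
    simp only [coordEval_apply, eval_mul, eval_X, mul_assoc]
  · ext i n
    simp [coordEval_apply]
  · rintro _ ⟨R, rfl⟩ hR
    refine h R ?_
    rintro rfl
    refine hR ?_
    ext i n
    simp [coordEval_apply]

end Algebra

theorem stmt_15_general (p : ℝ≥0∞) [Fact (1 ≤ p)] (hp : p ≠ ⊤) {d : ℕ} [NeZero d]
    (γ : ℝ → (Fin d → ℝ)) (L : NNReal) (hγ : LipschitzOnWith L γ (Set.Icc (0 : ℝ) 1))
    (hγmem : ∀ t ∈ Set.Icc (0 : ℝ) 1, ∀ i, 1 < γ t i)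
    (T : (Fin d → ℝ) → ((Fin d → lpC p) →L[ℂ] (Fin d → lpC p)))
    (hT : ∀ lam ∈ γ '' Set.Icc (0 : ℝ) 1,
      IsProductShift p d (fun a _n => a) (T lam) lam) :
    CommonHypercyclicAlgebraCW p d (γ '' Set.Icc (0 : ℝ) 1) T ∧
      ∃ x : Fin d → lpC p, ∀ lam ∈ γ '' Set.Icc (0 : ℝ) 1,
        Dense (Set.range fun n : ℕ => ((T lam) ^ (n + 1)) x) := by
  obtain ⟨f, hf, ⟨κ, hκ0, hκ⟩, hγf⟩ := exists_lipschitzWith_log zero_le_one hγ hγmem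
  obtain ⟨x, hx⟩ := exists_common_universal_vector hp hf hκ0 hκ isCompact_Icc
    (p := p) (K := Set.Icc 0 1) fun s hs => hs.1
  have hdense : ∀ R : ℂ[X], R ≠ 0 → ∀ lam ∈ γ '' Set.Icc (0 : ℝ) 1,
      Dense (Set.range fun n : ℕ => ((T lam) ^ (n + 1)) fun i => coordEval R (x i)) := by
    rintro R hR _ ⟨s, hs, rfl⟩
    rw [(hT _ ⟨s, hs, rfl⟩).eq_productShift]
    simp only [hγf s hs]
    exact dense_range_succ_of_mapClusterPt
      (mapClusterPt_productShift_pow_coordEval hp (hx s hs) hR)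
  have horbit : ∀ lam ∈ γ '' Set.Icc (0 : ℝ) 1,
      Dense (Set.range fun n : ℕ => ((T lam) ^ (n + 1)) x) := by
    simpa only [coordEval_one] using hdense 1 one_ne_zero
  have := nontrivial_lpC p
  have hx0 : x ≠ 0 := ne_zero_of_dense_orbit (horbit _ ⟨0, Set.left_mem_Icc.2 zero_le_one, rfl⟩)
  exact ⟨commonHypercyclicAlgebraCW_of_forall_coordEval hx0 hdense, x, horbit⟩

/-- Example 2.11 of the paper: for a Lipschitz curve `Γ ⊆ (1,∞)²`, the family
`(λB × μB)_{(λ,μ) ∈ Γ}` on `ℓᵖ(ℕ)²` admits a common hypercyclic algebra for the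
coordinatewise product, and in particular a common hypercyclic vector. -/
theorem stmt_15 (p : ℝ≥0∞) [Fact (1 ≤ p)] (hp : p ≠ ⊤)
    (γ : ℝ → (Fin 2 → ℝ)) (L : NNReal) (hγ : LipschitzOnWith L γ (Set.Icc (0 : ℝ) 1))
    (hγmem : ∀ t ∈ Set.Icc (0 : ℝ) 1, ∀ i, 1 < γ t i)
    (T : (Fin 2 → ℝ) → ((Fin 2 → lpC p) →L[ℂ] (Fin 2 → lpC p)))
    (hT : ∀ lam ∈ γ '' Set.Icc (0 : ℝ) 1,
      IsProductShift p 2 (fun a _n => a) (T lam) lam) :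
    CommonHypercyclicAlgebraCW p 2 (γ '' Set.Icc (0 : ℝ) 1) T ∧
      ∃ x : Fin 2 → lpC p, ∀ lam ∈ γ '' Set.Icc (0 : ℝ) 1,
        Dense (Set.range fun n : ℕ => ((T lam) ^ (n + 1)) x) :=
  stmt_15_general p hp γ L hγ hγmem T hT
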